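/- Let k be a field of characteristic zero. The catalecticant of the binary sextic, i.e. the determinant of the 4×4 Hankel matrix [[a,b,c,d],[b,c,d,e],[c,d,e,f],[d,e,f,g]], is an SL₂-invariant polynomial in k[a,b,c,d,e,f,g]: for every M ∈ SL₂(k), M·det([[a,b,c,d],[b,c,d,e],[c,d,e,f],[d,e,f,g]]) = det([[a,b,c,d],[b,c,d,e],[c,d,e,f],[d,e,f,g]]). -/

import Mathlib

/-!
Let `p, q, r, s` be the entries of `M`. Writing a sextic symbolically as `(α x + β y) ^ 6`, so that
its `i`-th coefficient is `α ^ (6 - i) * β ^ i`, the substitution replaces `α` by `p α + q β` and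
`β` by `r α + s β`. The Hankel matrix of the sextic is then `u uᵀ` with
`u = (α ^ 3, α ^ 2 β, α β ^ 2, β ^ 3)`, and `u` is transformed by the matrix `S` of the symmetric cube
of `M`. Since symbolic identities that are linear in the degree-six monomials hold for arbitrary
coefficients, the Hankel matrix `H` of any sextic becomes `S * H * Sᵀ` (`hankel_transform`).
As `det S = (det M) ^ 6 = 1` (`det_symCube`), the determinant does not change.

To pass from the equation of forms to the coefficients, `transform` gives the coefficients of the
substituted form explicitly, and in characteristic zero a form determines its coefficient vector
because the binomial factors `6, 15, 20` can be cancelled (`sextic_injective`).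
-/

open MvPolynomial

/-- The binary sextic `a x^6 + 6b x^5 y + 15c x^4 y^2 + 20d x^3 y^3 + 15e x^2 y^4 +
6f x y^5 + g y^6` with coefficient vector `v = (a,b,c,d,e,f,g)`. -/
noncomputable def sextic {A : Type*} [CommRing A] (v : Fin 7 → A) :
    MvPolynomial (Fin 2) A :=
  C (v 0) * X 0 ^ 6 + C (6 * v 1) * X 0 ^ 5 * X 1 + C (15 * v 2) * X 0 ^ 4 * X 1 ^ 2 +
    C (20 * v 3) * X 0 ^ 3 * X 1 ^ 3 + C (15 * v 4) * X 0 ^ 2 * X 1 ^ 4 +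
    C (6 * v 5) * X 0 * X 1 ^ 5 + C (v 6) * X 1 ^ 6

/-- The substituted form `F(x m₁₁ + y m₂₁, x m₁₂ + y m₂₂)`. -/
noncomputable def substAct {A : Type*} [CommRing A] (M : Matrix (Fin 2) (Fin 2) A)
    (F : MvPolynomial (Fin 2) A) : MvPolynomial (Fin 2) A :=
  aeval (fun i => C (M 0 i) * X 0 + C (M 1 i) * X 1) F

/-- `P ∈ k[a,…,g]` is SL₂-invariant: whenever `det M = 1` and `w` is the coefficient
vector of the substituted sextic, `P(w) = P(v)`. -/
def IsSL2Invariant {k : Type*} [CommRing k] (P : MvPolynomial (Fin 7) k) : Prop :=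
  ∀ M : Matrix (Fin 2) (Fin 2) k, M.det = 1 →
    ∀ v w : Fin 7 → k, sextic w = substAct M (sextic v) →
      eval w P = eval v P

/-- The Hankel matrix of the coefficient vector of a binary sextic. -/
def hankel {A : Type*} (v : Fin 7 → A) : Matrix (Fin 4) (Fin 4) A :=
  !![v 0, v 1, v 2, v 3;
     v 1, v 2, v 3, v 4;
     v 2, v 3, v 4, v 5;
     v 3, v 4, v 5, v 6]

/-- The symmetric cube of `!![p, q; r, s]`: row `i` lists the coefficients of
`(p α + q β) ^ (3 - i) * (r α + s β) ^ i` with respect to `α ^ 3, α ^ 2 β, α β ^ 2, β ^ 3`. -/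
def symCube {A : Type*} [CommRing A] (p q r s : A) : Matrix (Fin 4) (Fin 4) A :=
  !![p ^ 3, 3 * p ^ 2 * q, 3 * p * q ^ 2, q ^ 3;
     p ^ 2 * r, p ^ 2 * s + 2 * p * q * r, 2 * p * q * s + q ^ 2 * r, q ^ 2 * s;
     p * r ^ 2, 2 * p * r * s + q * r ^ 2, p * s ^ 2 + 2 * q * r * s, q * s ^ 2;
     r ^ 3, 3 * r ^ 2 * s, 3 * r * s ^ 2, s ^ 3]

/-- The coefficient vector (binomial factors removed) of the sextic obtained from the one with
coefficients `v` by substituting `!![p, q; r, s]`: in entry `i`, the factor of `v j` is the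
coefficient of `α ^ (6 - j) * β ^ j` in `(p α + q β) ^ (6 - i) * (r α + s β) ^ i`. -/
def transform {A : Type*} [CommRing A] (p q r s : A) (v : Fin 7 → A) : Fin 7 → A :=
  ![(p ^ 6) * v 0 +
      (6 * p ^ 5 * q) * v 1 +
      (15 * p ^ 4 * q ^ 2) * v 2 +
      (20 * p ^ 3 * q ^ 3) * v 3 +
      (15 * p ^ 2 * q ^ 4) * v 4 +
      (6 * p * q ^ 5) * v 5 +
      (q ^ 6) * v 6,
    (p ^ 5 * r) * v 0 +
      (p ^ 5 * s + 5 * p ^ 4 * q * r) * v 1 +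
      (5 * p ^ 4 * q * s + 10 * p ^ 3 * q ^ 2 * r) * v 2 +
      (10 * p ^ 3 * q ^ 2 * s + 10 * p ^ 2 * q ^ 3 * r) * v 3 +
      (10 * p ^ 2 * q ^ 3 * s + 5 * p * q ^ 4 * r) * v 4 +
      (5 * p * q ^ 4 * s + q ^ 5 * r) * v 5 +
      (q ^ 5 * s) * v 6,
    (p ^ 4 * r ^ 2) * v 0 +
      (2 * p ^ 4 * r * s + 4 * p ^ 3 * q * r ^ 2) * v 1 +
      (p ^ 4 * s ^ 2 + 8 * p ^ 3 * q * r * s + 6 * p ^ 2 * q ^ 2 * r ^ 2) * v 2 +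
      (4 * p ^ 3 * q * s ^ 2 + 12 * p ^ 2 * q ^ 2 * r * s + 4 * p * q ^ 3 * r ^ 2) * v 3 +
      (6 * p ^ 2 * q ^ 2 * s ^ 2 + 8 * p * q ^ 3 * r * s + q ^ 4 * r ^ 2) * v 4 +
      (4 * p * q ^ 3 * s ^ 2 + 2 * q ^ 4 * r * s) * v 5 +
      (q ^ 4 * s ^ 2) * v 6,
    (p ^ 3 * r ^ 3) * v 0 +
      (3 * p ^ 3 * r ^ 2 * s + 3 * p ^ 2 * q * r ^ 3) * v 1 +
      (3 * p ^ 3 * r * s ^ 2 + 9 * p ^ 2 * q * r ^ 2 * s + 3 * p * q ^ 2 * r ^ 3) * v 2 +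
      (p ^ 3 * s ^ 3 + 9 * p ^ 2 * q * r * s ^ 2 + 9 * p * q ^ 2 * r ^ 2 * s + q ^ 3 * r ^ 3) * v 3 +
      (3 * p ^ 2 * q * s ^ 3 + 9 * p * q ^ 2 * r * s ^ 2 + 3 * q ^ 3 * r ^ 2 * s) * v 4 +
      (3 * p * q ^ 2 * s ^ 3 + 3 * q ^ 3 * r * s ^ 2) * v 5 +
      (q ^ 3 * s ^ 3) * v 6,
    (p ^ 2 * r ^ 4) * v 0 +
      (4 * p ^ 2 * r ^ 3 * s + 2 * p * q * r ^ 4) * v 1 +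
      (6 * p ^ 2 * r ^ 2 * s ^ 2 + 8 * p * q * r ^ 3 * s + q ^ 2 * r ^ 4) * v 2 +
      (4 * p ^ 2 * r * s ^ 3 + 12 * p * q * r ^ 2 * s ^ 2 + 4 * q ^ 2 * r ^ 3 * s) * v 3 +
      (p ^ 2 * s ^ 4 + 8 * p * q * r * s ^ 3 + 6 * q ^ 2 * r ^ 2 * s ^ 2) * v 4 +
      (2 * p * q * s ^ 4 + 4 * q ^ 2 * r * s ^ 3) * v 5 +
      (q ^ 2 * s ^ 4) * v 6,
    (p * r ^ 5) * v 0 +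
      (5 * p * r ^ 4 * s + q * r ^ 5) * v 1 +
      (10 * p * r ^ 3 * s ^ 2 + 5 * q * r ^ 4 * s) * v 2 +
      (10 * p * r ^ 2 * s ^ 3 + 10 * q * r ^ 3 * s ^ 2) * v 3 +
      (5 * p * r * s ^ 4 + 10 * q * r ^ 2 * s ^ 3) * v 4 +
      (p * s ^ 5 + 5 * q * r * s ^ 4) * v 5 +
      (q * s ^ 5) * v 6,
    (r ^ 6) * v 0 +
      (6 * r ^ 5 * s) * v 1 +
      (15 * r ^ 4 * s ^ 2) * v 2 +
      (20 * r ^ 3 * s ^ 3) * v 3 +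
      (15 * r ^ 2 * s ^ 4) * v 4 +
      (6 * r * s ^ 5) * v 5 +
      (s ^ 6) * v 6]

theorem sextic_transform {A : Type*} [CommRing A] (M : Matrix (Fin 2) (Fin 2) A)
    (v : Fin 7 → A) :
    sextic (transform (M 0 0) (M 0 1) (M 1 0) (M 1 1) v) = substAct M (sextic v) := by
  simp only [sextic, substAct, transform, map_add, map_mul, map_pow, aeval_X, algHom_C,
    algebraMap_eq, map_ofNat, Matrix.cons_val]
  ring

theorem sextic_injective {k : Type*} [Field k] [CharZero k] :
    Function.Injective (sextic : (Fin 7 → k) → MvPolynomial (Fin 2) k) := by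
  intro v w h
  -- Dehomogenize by `x = 1`, so that coefficients of univariate polynomials can be compared.
  have h' := congrArg (aeval ![(1 : Polynomial k), Polynomial.X]) h
  simp only [sextic, map_add, map_mul, map_pow, aeval_X, algHom_C, Matrix.cons_val,
    one_pow, mul_one, Polynomial.algebraMap_eq] at h'
  simp only [← Polynomial.C_mul] at h'
  have hc := fun n : ℕ => congrArg (fun f => Polynomial.coeff f n) h'
  have h0 := hc 0
  have h1 := hc 1
  have h2 := hc 2
  have h3 := hc 3
  have h4 := hc 4
  have h5 := hc 5
  have h6 := hc 6
  simp [Polynomial.coeff_X, Polynomial.coeff_X_pow, Polynomial.coeff_C, Polynomial.coeff_C_mul,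
    -map_mul] at h0 h1 h2 h3 h4 h5 h6
  funext i
  fin_cases i <;> assumption

theorem hankel_transform {A : Type*} [CommRing A] (p q r s : A) (v : Fin 7 → A) :
    hankel (transform p q r s v) =
      symCube p q r s * hankel v * (symCube p q r s).transpose := by
  ext i j
  fin_cases i <;> fin_cases j <;>
    simp [hankel, transform, symCube, Matrix.mul_apply, Fin.sum_univ_four] <;> ring

theorem det_symCube {A : Type*} [CommRing A] (p q r s : A) :
    (symCube p q r s).det = (p * s - q * r) ^ 6 := by
  simp [symCube, Matrix.det_succ_row_zero, Fin.sum_univ_succ, Fin.succAbove]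
  ring

theorem eval_det_hankel {A : Type*} [CommRing A] (v : Fin 7 → A) :
    eval v (hankel (X : Fin 7 → MvPolynomial (Fin 7) A)).det = (hankel v).det := by
  rw [RingHom.map_det]
  congr 1
  ext i j
  fin_cases i <;> fin_cases j <;> simp [hankel]

/-- The catalecticant, the determinant of the 4×4 Hankel matrix in the
coefficients of a binary sextic, is an SL₂-invariant. -/
theorem stmt3 {k : Type*} [Field k] [CharZero k] :
    IsSL2Invariant
      (Matrix.det
        !![(X 0 : MvPolynomial (Fin 7) k), X 1, X 2, X 3;
           X 1, X 2, X 3, X 4;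
           X 2, X 3, X 4, X 5;
           X 3, X 4, X 5, X 6]) := by
  intro M hM v w h
  have hw : w = transform (M 0 0) (M 0 1) (M 1 0) (M 1 1) v :=
    sextic_injective (h.trans (sextic_transform M v).symm)
  rw [Matrix.det_fin_two] at hM
  change eval w (hankel X).det = eval v (hankel X).det
  rw [eval_det_hankel, eval_det_hankel, hw, hankel_transform, Matrix.det_mul, Matrix.det_mul,
    Matrix.det_transpose, det_symCube, hM]
  ring
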